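/- Let a : T → ℂ have absolutely summable Fourier coefficients, be nonvanishing and even, and suppose a(e^{iθ}) = a₊(e^{−iθ}) · G · a₊(e^{iθ}) where a₊(z) = Σ_{k≥0} γ_k z^k with Σ|γ_k| < ∞, a₊(0) = 1, a₊ nonvanishing on the closed unit disk, and G ∈ ℂ. Set ψ(e^{iθ}) = a₊(e^{−iθ})/a₊(e^{iθ}). Then any bounded operator I + H(ψ) on ℓ²(ℕ) (with entries δ_{jk} + ψ_{j+k+1}) is invertible, and for every n ≥ 1: det( (a_{j−k} + a_{j+k+1})_{j,k=0}^{n−1} ) = G^n · det[P_n (I + H(ψ))^{−1} P_n]. -/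

import Mathlib

open Filter MeasureTheory
open scoped InnerProductSpace

noncomputable section

/-- ℓ²(ℕ) over ℂ. -/
abbrev l2 : Type := lp (fun _ : ℕ => ℂ) 2

/-- The `k`-th Fourier coefficient of a function on the unit circle, given as a
`2π`-periodic function of the angle: `a_k = (1/(2π)) ∫_0^{2π} f(θ) e^{-ikθ} dθ`. -/
def fc (f : ℝ → ℂ) (k : ℤ) : ℂ :=
  ((1 / (2 * Real.pi) : ℝ) : ℂ) *
    ∫ θ in (0:ℝ)..(2 * Real.pi), f θ * Complex.exp (-(Complex.I * k * θ))

/-- The standard orthonormal basis vector `e_j` of ℓ²(ℕ). -/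
def ee (j : ℕ) : l2 := lp.single 2 j 1

/-- Matrix entry `⟨e_j, A e_k⟩` of an operator on ℓ²(ℕ). -/
def ent (A : l2 →L[ℂ] l2) (j k : ℕ) : ℂ := ⟪ee j, A (ee k)⟫_ℂ

open scoped Real ComplexConjugate

instance two_pi_pos_fact : Fact (0 < 2 * π) := ⟨Real.two_pi_pos⟩

/-- The angle circle `ℝ / 2πℤ`. -/
abbrev Torus : Type := AddCircle (2 * π)

/-- The Hilbert space `L²(ℝ / 2πℤ)`. -/
abbrev L2Torus : Type := Lp ℂ 2 (AddCircle.haarAddCircle (T := 2 * π))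

section SequenceOperators

lemma ee_apply (j i : ℕ) : (ee j : ∀ _ : ℕ, ℂ) i = if i = j then 1 else 0 := by
  simp [ee, lp.single_apply, Pi.single_apply]

lemma inner_ee_left (j : ℕ) (x : l2) : ⟪ee j, x⟫_ℂ = x j := by
  simp [ee, lp.inner_single_left]

lemma hasSum_ee (x : l2) : HasSum (fun i => x i • ee i) x := by
  have h := lp.hasSum_single (E := fun _ : ℕ => ℂ) (p := 2) (by simp) x
  refine h.congr_fun fun i => ?_
  rw [ee, ← lp.single_smul]
  simp

lemma ext_of_ee {E : Type*} [NormedAddCommGroup E] [NormedSpace ℂ E] {A B : l2 →L[ℂ] E}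
    (h : ∀ k, A (ee k) = B (ee k)) : A = B := by
  ext1 x
  have hA := (hasSum_ee x).mapL A
  have hB := (hasSum_ee x).mapL B
  simp only [map_smul, h] at hA hB
  exact hA.unique hB

lemma ext_of_ent {A B : l2 →L[ℂ] l2} (h : ∀ j k, ent A j k = ent B j k) : A = B := by
  refine ext_of_ee fun k => ?_
  ext j
  simpa only [ent, inner_ee_left] using h j k

lemma ent_one (j k : ℕ) : ent 1 j k = if j = k then 1 else 0 := by
  simp [ent, inner_ee_left, ee_apply]

lemma ent_add (A B : l2 →L[ℂ] l2) (j k : ℕ) : ent (A + B) j k = ent A j k + ent B j k := by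
  simp [ent]

lemma ent_adjoint (A : l2 →L[ℂ] l2) (j k : ℕ) :
    ent (ContinuousLinearMap.adjoint A) j k = conj (ent A k j) := by
  rw [ent, ent, ContinuousLinearMap.adjoint_inner_right, inner_conj_symm]

/-- Multiplication on the right by an upper triangular operator only involves finite sections. -/
lemma ent_mul_of_upper (X U : l2 →L[ℂ] l2) (hU : ∀ j k, k < j → ent U j k = 0) {n k : ℕ}
    (hk : k < n) (j : ℕ) :
    ent (X * U) j k = ∑ p ∈ Finset.range n, ent X j p * ent U p k := by
  have h : U (ee k) = ∑ p ∈ Finset.range n, ent U p k • ee p := by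
    refine (hasSum_ee (U (ee k))).unique ?_
    simp only [← inner_ee_left _ (U (ee k))]
    refine hasSum_sum_of_ne_finset_zero fun p hp => ?_
    have := hU p k (by simp at hp; omega)
    rw [ent] at this
    rw [this, zero_smul]
  rw [ent, mul_apply_eq_comp, h, map_sum, inner_sum]
  refine Finset.sum_congr rfl fun p _ => ?_
  rw [map_smul, inner_smul_right, mul_comm]
  rfl

/-- Multiplication on the left by a lower triangular operator only involves finite sections. -/
lemma ent_mul_of_lower (L X : l2 →L[ℂ] l2) (hL : ∀ j k, j < k → ent L j k = 0) {n j : ℕ}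
    (hj : j < n) (k : ℕ) :
    ent (L * X) j k = ∑ p ∈ Finset.range n, ent L j p * ent X p k := by
  have h := ent_mul_of_upper (ContinuousLinearMap.adjoint X) (ContinuousLinearMap.adjoint L)
    (fun j k hjk => by rw [ent_adjoint, hL k j hjk, map_zero]) hj k
  have e : ContinuousLinearMap.adjoint X * ContinuousLinearMap.adjoint L
      = ContinuousLinearMap.adjoint (L * X) := (ContinuousLinearMap.adjoint_comp L X).symm
  rw [e, ent_adjoint] at h
  rw [← Complex.conj_conj (ent (L * X) j k), h, map_sum]
  refine Finset.sum_congr rfl fun p _ => ?_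
  simp only [ent_adjoint, map_mul, Complex.conj_conj]
  ring

/-- The determinants of the finite sections are unchanged by unipotent triangular factors. -/
lemma det_section_of_unipotent (L X U : l2 →L[ℂ] l2)
    (hL : ∀ j k, j < k → ent L j k = 0) (hL1 : ∀ j, ent L j j = 1)
    (hU : ∀ j k, k < j → ent U j k = 0) (hU1 : ∀ j, ent U j j = 1) (n : ℕ) :
    (Matrix.of fun j k : Fin n => ent (L * X * U) j k).det
      = (Matrix.of fun j k : Fin n => ent X j k).det := by
  have h : (Matrix.of fun j k : Fin n => ent (L * X * U) j k)
      = (Matrix.of fun j k : Fin n => ent L j k) * (Matrix.of fun j k : Fin n => ent X j k)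
        * (Matrix.of fun j k : Fin n => ent U j k) := by
    ext j k
    simp only [Matrix.of_apply, Matrix.mul_apply]
    rw [ent_mul_of_upper _ _ hU k.2, ← Fin.sum_univ_eq_sum_range
      (fun p => ent (L * X) j p * ent U p k)]
    refine Finset.sum_congr rfl fun p _ => ?_
    rw [ent_mul_of_lower _ _ hL j.2, ← Fin.sum_univ_eq_sum_range
      (fun q => ent L j q * ent X q p)]
  have hdL : (Matrix.of fun j k : Fin n => ent L j k).det = 1 := by
    have ht : (Matrix.of fun j k : Fin n => ent L j k).IsLowerTriangular :=
      fun j k hjk => hL j k hjk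
    rw [Matrix.det_of_isLowerTriangular _ ht]
    simp [hL1]
  have hdU : (Matrix.of fun j k : Fin n => ent U j k).det = 1 := by
    have ht : (Matrix.of fun j k : Fin n => ent U j k).IsUpperTriangular :=
      fun j k hjk => hU j k hjk
    rw [Matrix.det_of_isUpperTriangular ht]
    simp [hU1]
  rw [h, Matrix.det_mul, Matrix.det_mul, hdL, hdU, one_mul, mul_one]

end SequenceOperators

section Multiplication

/-- Multiplication by a continuous function on `L²(ℝ / 2πℤ)`. -/
def mulOp (f : C(Torus, ℂ)) : L2Torus →L[ℂ] L2Torus :=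
  (ContinuousLinearMap.mul ℂ ℂ).holderL AddCircle.haarAddCircle ⊤ 2 2
    (ContinuousMap.toLp ⊤ AddCircle.haarAddCircle ℂ f)

lemma coeFn_mulOp (f : C(Torus, ℂ)) (g : L2Torus) :
    mulOp f g =ᵐ[AddCircle.haarAddCircle] fun x => f x * g x := by
  have h := (ContinuousLinearMap.mul ℂ ℂ).coeFn_holder (r := 2)
    (ContinuousMap.toLp ⊤ AddCircle.haarAddCircle ℂ f) g
  rw [mulOp, ContinuousLinearMap.holderL_apply_apply]
  filter_upwards [h, ContinuousMap.coeFn_toLp (p := ⊤) (𝕜 := ℂ) AddCircle.haarAddCircle f]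
    with x hx hf
  rw [hx, hf, ContinuousLinearMap.mul_apply']

lemma mulOp_mul (f g : C(Torus, ℂ)) : mulOp (f * g) = mulOp f ∘L mulOp g := by
  ext1 u
  refine Lp.ext ?_
  filter_upwards [coeFn_mulOp (f * g) u, coeFn_mulOp f (mulOp g u), coeFn_mulOp g u]
    with x h1 h2 h3
  rw [h1, ContinuousLinearMap.comp_apply, h2, h3, ContinuousMap.mul_apply, mul_assoc]

lemma inner_mulOp_fourierLp (f : C(Torus, ℂ)) (m n : ℤ) :
    ⟪fourierLp (T := 2 * π) 2 m, mulOp f (fourierLp 2 n)⟫_ℂ = fourierCoeff f (m - n) := by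
  rw [L2.inner_def, fourierCoeff]
  refine integral_congr_ae ?_
  filter_upwards [coeFn_fourierLp (T := 2 * π) 2 m, coeFn_fourierLp (T := 2 * π) 2 n,
    coeFn_mulOp f (fourierLp 2 n)] with x h1 h2 h3
  rw [h1, h3, h2, RCLike.inner_apply, neg_sub, sub_eq_add_neg, fourier_add, fourier_neg,
    smul_eq_mul]
  ring

end Multiplication

section Toeplitz

lemma orthonormal_fourier_nat :
    Orthonormal ℂ fun n : ℕ => fourierLp (T := 2 * π) 2 (n : ℤ) :=
  orthonormal_fourier.comp _ Nat.cast_injective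

lemma orthonormal_fourier_neg_succ :
    Orthonormal ℂ fun n : ℕ => fourierLp (T := 2 * π) 2 (-(n : ℤ) - 1) :=
  orthonormal_fourier.comp (fun n : ℕ => -(n : ℤ) - 1) fun m n h => by
    simp only at h
    omega

/-- The isometry `e_n ↦ e^{inθ}` onto the Hardy space. -/
def hardyEmb : l2 →L[ℂ] L2Torus :=
  orthonormal_fourier_nat.orthogonalFamily.linearIsometry.toContinuousLinearMap

/-- The isometry `e_n ↦ e^{-i(n+1)θ}` onto the complement of the Hardy space. -/
def coHardyEmb : l2 →L[ℂ] L2Torus :=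
  orthonormal_fourier_neg_succ.orthogonalFamily.linearIsometry.toContinuousLinearMap

lemma hardyEmb_ee (n : ℕ) : hardyEmb (ee n) = fourierLp 2 (n : ℤ) := by
  simp [hardyEmb, ee, OrthogonalFamily.linearIsometry_apply_single]

lemma coHardyEmb_ee (n : ℕ) : coHardyEmb (ee n) = fourierLp 2 (-(n : ℤ) - 1) := by
  simp [coHardyEmb, ee, OrthogonalFamily.linearIsometry_apply_single]

lemma hardy_decomposition :
    hardyEmb ∘L hardyEmb.adjoint + coHardyEmb ∘L coHardyEmb.adjoint = 1 := by
  have inner_fourier : ∀ m n : ℤ, ⟪fourierLp (T := 2 * π) 2 m, fourierLp 2 n⟫_ℂ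
      = if m = n then 1 else 0 := fun m n => by
    rw [orthonormal_iff_ite.mp orthonormal_fourier]
  have h1 : ∀ n : ℕ, hardyEmb.adjoint (fourierLp 2 (n : ℤ)) = ee n := fun n => by
    ext j
    rw [← inner_ee_left, ContinuousLinearMap.adjoint_inner_right, hardyEmb_ee, inner_fourier,
      ee_apply]
    simp
  have h2 : ∀ n : ℕ, hardyEmb.adjoint (fourierLp 2 (-(n : ℤ) - 1)) = 0 := fun n => by
    ext j
    rw [← inner_ee_left, ContinuousLinearMap.adjoint_inner_right, hardyEmb_ee, inner_fourier,
      if_neg (by omega)]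
    rfl
  have h3 : ∀ n : ℕ, coHardyEmb.adjoint (fourierLp 2 (n : ℤ)) = 0 := fun n => by
    ext j
    rw [← inner_ee_left, ContinuousLinearMap.adjoint_inner_right, coHardyEmb_ee, inner_fourier,
      if_neg (by omega)]
    rfl
  have h4 : ∀ n : ℕ, coHardyEmb.adjoint (fourierLp 2 (-(n : ℤ) - 1)) = ee n := fun n => by
    ext j
    rw [← inner_ee_left, ContinuousLinearMap.adjoint_inner_right, coHardyEmb_ee, inner_fourier,
      ee_apply]
    simp
  have hd := (fourierBasis (T := 2 * π)).dense_span
  rw [coe_fourierBasis] at hd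
  refine ContinuousLinearMap.ext_on (Submodule.dense_iff_topologicalClosure_eq_top.mpr hd) ?_
  rintro _ ⟨n, rfl⟩
  rcases le_or_gt 0 n with hn | hn
  · obtain ⟨k, rfl⟩ := Int.eq_ofNat_of_zero_le hn
    simp [h1, h3, hardyEmb_ee]
  · obtain ⟨k, rfl⟩ : ∃ k : ℕ, n = -(k : ℤ) - 1 := ⟨(-n - 1).toNat, by omega⟩
    simp [h2, h4, coHardyEmb_ee]

/-- The Toeplitz operator with a continuous symbol. -/
def toeplitzOp (f : C(Torus, ℂ)) : l2 →L[ℂ] l2 := hardyEmb.adjoint ∘L mulOp f ∘L hardyEmb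

/-- The Hankel operator with a continuous symbol. -/
def hankelOp (f : C(Torus, ℂ)) : l2 →L[ℂ] l2 := hardyEmb.adjoint ∘L mulOp f ∘L coHardyEmb

/-- The reflected symbol `θ ↦ f (-θ)`. -/
def reflect (f : C(Torus, ℂ)) : C(Torus, ℂ) := f.comp ⟨fun x => -x, continuous_neg⟩

@[simp] lemma reflect_apply (f : C(Torus, ℂ)) (x : Torus) : reflect f x = f (-x) := rfl

lemma reflect_reflect (f : C(Torus, ℂ)) : reflect (reflect f) = f := by
  ext x
  simp

lemma fourierCoeff_reflect (f : C(Torus, ℂ)) (n : ℤ) :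
    fourierCoeff (reflect f) n = fourierCoeff f (-n) := by
  rw [fourierCoeff, fourierCoeff, ← integral_neg_eq_self]
  refine integral_congr_ae (.of_forall fun x => ?_)
  simp [fourier_apply]

lemma ent_toeplitzOp (f : C(Torus, ℂ)) (j k : ℕ) :
    ent (toeplitzOp f) j k = fourierCoeff f ((j : ℤ) - k) := by
  rw [ent, toeplitzOp, ContinuousLinearMap.comp_apply, ContinuousLinearMap.comp_apply,
    ContinuousLinearMap.adjoint_inner_right, hardyEmb_ee, hardyEmb_ee, inner_mulOp_fourierLp]

lemma ent_hankelOp (f : C(Torus, ℂ)) (j k : ℕ) :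
    ent (hankelOp f) j k = fourierCoeff f ((j : ℤ) + k + 1) := by
  rw [ent, hankelOp, ContinuousLinearMap.comp_apply, ContinuousLinearMap.comp_apply,
    ContinuousLinearMap.adjoint_inner_right, hardyEmb_ee, coHardyEmb_ee, inner_mulOp_fourierLp]
  congr 1
  ring

lemma coHardy_compression_eq_toeplitzOp (f : C(Torus, ℂ)) :
    coHardyEmb.adjoint ∘L mulOp f ∘L coHardyEmb = toeplitzOp (reflect f) := by
  refine ext_of_ent fun j k => ?_
  rw [ent, ContinuousLinearMap.comp_apply, ContinuousLinearMap.comp_apply,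
    ContinuousLinearMap.adjoint_inner_right, coHardyEmb_ee, coHardyEmb_ee, inner_mulOp_fourierLp,
    ent_toeplitzOp, fourierCoeff_reflect]
  congr 1
  ring

lemma coHardy_compression_eq_hankelOp (f : C(Torus, ℂ)) :
    coHardyEmb.adjoint ∘L mulOp f ∘L hardyEmb = hankelOp (reflect f) := by
  refine ext_of_ent fun j k => ?_
  rw [ent, ContinuousLinearMap.comp_apply, ContinuousLinearMap.comp_apply,
    ContinuousLinearMap.adjoint_inner_right, coHardyEmb_ee, hardyEmb_ee, inner_mulOp_fourierLp,
    ent_hankelOp, fourierCoeff_reflect]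
  congr 1
  ring

lemma mulOp_mul_decomposition (f g : C(Torus, ℂ)) (R S : l2 →L[ℂ] L2Torus) :
    R.adjoint ∘L mulOp (f * g) ∘L S
      = (R.adjoint ∘L mulOp f ∘L hardyEmb) ∘L (hardyEmb.adjoint ∘L mulOp g ∘L S)
        + (R.adjoint ∘L mulOp f ∘L coHardyEmb) ∘L (coHardyEmb.adjoint ∘L mulOp g ∘L S) := by
  ext1 x
  have h := congrArg (fun B : L2Torus →L[ℂ] L2Torus => B (mulOp g (S x))) hardy_decomposition
  simp only [add_apply, ContinuousLinearMap.comp_apply, one_apply_eq_self]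
    at h
  simp only [mulOp_mul, add_apply, ContinuousLinearMap.comp_apply]
  rw [← map_add, ← map_add, h]

lemma toeplitzOp_mul (f g : C(Torus, ℂ)) :
    toeplitzOp (f * g) = toeplitzOp f * toeplitzOp g + hankelOp f * hankelOp (reflect g) := by
  rw [← coHardy_compression_eq_hankelOp]
  exact mulOp_mul_decomposition f g hardyEmb hardyEmb

lemma hankelOp_mul (f g : C(Torus, ℂ)) :
    hankelOp (f * g) = toeplitzOp f * hankelOp g + hankelOp f * toeplitzOp (reflect g) := by
  rw [← coHardy_compression_eq_toeplitzOp]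
  exact mulOp_mul_decomposition f g hardyEmb coHardyEmb

lemma fourierCoeff_one (n : ℤ) :
    fourierCoeff (1 : C(Torus, ℂ)) n = if n = 0 then 1 else 0 := by
  have h : (1 : C(Torus, ℂ)) = fourier (T := 2 * π) 0 := by
    ext x
    simp
  rw [h, fourierCoeff_fourier, Pi.single_apply]

lemma toeplitzOp_one : toeplitzOp 1 = 1 := by
  refine ext_of_ent fun j k => ?_
  rw [ent_toeplitzOp, fourierCoeff_one, ent_one]
  simp [sub_eq_zero]

lemma hankelOp_one : hankelOp 1 = 0 := by
  refine ext_of_ent fun j k => ?_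
  rw [ent_hankelOp, fourierCoeff_one, if_neg (by omega)]
  simp [ent]

/-- Toeplitz plus Hankel operators are multiplicative when the right symbol is even. -/
lemma toeplitz_add_hankel_mul (f : C(Torus, ℂ)) {g : C(Torus, ℂ)} (hg : reflect g = g) :
    toeplitzOp (f * g) + hankelOp (f * g)
      = (toeplitzOp f + hankelOp f) * (toeplitzOp g + hankelOp g) := by
  rw [toeplitzOp_mul, hankelOp_mul, hg]
  noncomm_ring

lemma reflect_mul (f g : C(Torus, ℂ)) : reflect (f * g) = reflect f * reflect g := rfl

/-- If `f` and its inverse `g` are of plus type, then `I + H(reflect f * g)` is invertible, and its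
inverse `B` factors the Toeplitz plus Hankel operator of the even symbol `reflect f * f`. -/
lemma exists_inverse_one_add_hankelOp {f g : C(Torus, ℂ)} (hfg : f * g = 1)
    (hf : hankelOp (reflect f) = 0) (hg : hankelOp (reflect g) = 0) :
    ∃ B : l2 →L[ℂ] l2, (1 + hankelOp (reflect f * g)) * B = 1 ∧
      B * (1 + hankelOp (reflect f * g)) = 1 ∧
      toeplitzOp (reflect f * f) + hankelOp (reflect f * f)
        = toeplitzOp f * B * toeplitzOp (reflect f) := by
  have hgf : g * f = 1 := by rw [mul_comm g, hfg]
  have hfg' : reflect f * reflect g = 1 := by rw [← reflect_mul, hfg]; rfl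
  have hgf' : reflect g * reflect f = 1 := by rw [mul_comm (reflect g), hfg']
  have hLK : toeplitzOp f * toeplitzOp g = 1 := by
    rw [← toeplitzOp_one, ← hfg, toeplitzOp_mul, hg, mul_zero, add_zero]
  have hKL : toeplitzOp g * toeplitzOp f = 1 := by
    rw [← toeplitzOp_one, ← hgf, toeplitzOp_mul, hf, mul_zero, add_zero]
  have hUV : toeplitzOp (reflect f) * toeplitzOp (reflect g) = 1 := by
    rw [← toeplitzOp_one, ← hfg', toeplitzOp_mul, hf, zero_mul, add_zero]
  have hVU : toeplitzOp (reflect g) * toeplitzOp (reflect f) = 1 := by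
    rw [← toeplitzOp_one, ← hgf', toeplitzOp_mul, hg, zero_mul, add_zero]
  have hA : 1 + hankelOp (reflect f * g)
      = (toeplitzOp g + hankelOp g) * toeplitzOp f := by
    rw [mul_comm (reflect f), hankelOp_mul, hf, mul_zero, zero_add, reflect_reflect, add_mul, hKL]
  have hMb : toeplitzOp (reflect g * g) + hankelOp (reflect g * g)
      = toeplitzOp (reflect g) * (toeplitzOp g + hankelOp g) := by
    rw [toeplitzOp_mul, hankelOp_mul, hg, zero_mul, zero_mul, add_zero, add_zero, mul_add]
  have even_a : reflect (reflect f * f) = reflect f * f := by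
    rw [reflect_mul, reflect_reflect, mul_comm f]
  have even_b : reflect (reflect g * g) = reflect g * g := by
    rw [reflect_mul, reflect_reflect, mul_comm g]
  have hMab := toeplitz_add_hankel_mul (reflect f * f) even_b
  have hMba := toeplitz_add_hankel_mul (reflect g * g) even_a
  have hab : reflect f * f * (reflect g * g) = 1 := by
    rw [mul_mul_mul_comm, hfg', hfg, one_mul]
  have hba : reflect g * g * (reflect f * f) = 1 := by rw [mul_comm (reflect g * g), hab]
  rw [hab, toeplitzOp_one, hankelOp_one, add_zero, hMb] at hMab
  rw [hba, toeplitzOp_one, hankelOp_one, add_zero, hMb] at hMba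
  rw [hA]
  generalize toeplitzOp (reflect f * f) + hankelOp (reflect f * f) = M at *
  generalize toeplitzOp g + hankelOp g = N at *
  generalize toeplitzOp (reflect f) = U at *
  generalize toeplitzOp (reflect g) = V at *
  generalize toeplitzOp f = L at *
  generalize toeplitzOp g = K at *
  refine ⟨K * M * V, ?_, ?_, ?_⟩
  · calc N * L * (K * M * V) = N * (L * K) * M * V := by noncomm_ring
      _ = (U * V) * N * M * V := by rw [hLK, hUV]; noncomm_ring
      _ = U * (V * N * M) * V := by noncomm_ring
      _ = 1 := by rw [← hMba, mul_one, hUV]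
  · calc K * M * V * (N * L) = K * (M * (V * N)) * L := by noncomm_ring
      _ = 1 := by rw [← hMab, mul_one, hKL]
  · calc M = (L * K) * M * (V * U) := by rw [hLK, hVU, one_mul, mul_one]
      _ = L * (K * M * V) * U := by noncomm_ring

end Toeplitz

section FourierCoefficients

lemma toCircle_coe (θ : ℝ) :
    ((AddCircle.toCircle (θ : Torus) : Circle) : ℂ) = Complex.exp (Complex.I * θ) := by
  rw [AddCircle.toCircle_apply_mk, Circle.coe_exp]
  congr 1
  have : (2 * π : ℝ) ≠ 0 := Real.two_pi_pos.ne'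
  rw [div_self this, one_mul, mul_comm]

lemma fc_eq_fourierCoeff (F : C(Torus, ℂ)) {f : ℝ → ℂ} (h : ∀ θ : ℝ, F θ = f θ) (n : ℤ) :
    fc f n = fourierCoeff F n := by
  rw [fourierCoeff_eq_intervalIntegral F n 0, fc, zero_add, Complex.real_smul]
  congr 1
  refine intervalIntegral.integral_congr fun θ _ => ?_
  simp only [smul_eq_mul]
  rw [h, mul_comm, fourier_apply, AddCircle.toCircle_zsmul, Circle.coe_zpow, toCircle_coe,
    ← Complex.exp_int_mul]
  congr 2
  push_cast
  ring

/-- The coefficients of nonpositive index of the boundary values of a holomorphic function. -/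
lemma fourierCoeff_boundary {h : ℂ → ℂ} (hc : ContinuousOn h (Metric.closedBall 0 1))
    (hd : DifferentiableOn ℂ h (Metric.ball 0 1)) (F : C(Torus, ℂ))
    (hF : ∀ x, F x = h (AddCircle.toCircle x)) (m : ℕ) :
    fourierCoeff F (-(m : ℤ)) = 0 ^ m * h 0 := by
  have key := Complex.two_pi_I_inv_smul_circleIntegral_sub_inv_smul_of_differentiable_on_off_countable
    (R := 1) (c := 0) (w := 0) (f := fun z => z ^ m * h z) (s := ∅) Set.countable_empty
    (by simp) ((continuousOn_id.pow m).mul hc) (fun z hz => by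
      have : DifferentiableAt ℂ h z := hd.differentiableAt (Metric.isOpen_ball.mem_nhds hz.1)
      fun_prop)
  have hI : (∮ z in C(0, 1), (z - 0)⁻¹ • (z ^ m * h z))
      = Complex.I * ∫ θ in (0 : ℝ)..(2 * π),
          F θ * Complex.exp (-(Complex.I * ((-(m : ℤ) : ℤ) : ℂ) * θ)) := by
    rw [circleIntegral, ← intervalIntegral.integral_const_mul]
    refine intervalIntegral.integral_congr fun θ _ => ?_
    have hz : circleMap 0 1 θ = Complex.exp (Complex.I * θ) := by simp [circleMap, mul_comm]
    have he : Complex.exp (-(Complex.I * ((-(m : ℤ) : ℤ) : ℂ) * θ))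
        = Complex.exp (Complex.I * θ) ^ m := by
      rw [← Complex.exp_nat_mul]
      congr 1
      push_cast
      ring
    simp only [deriv_circleMap, smul_eq_mul, sub_zero, hF, toCircle_coe, hz, he]
    have := Complex.exp_ne_zero (Complex.I * θ)
    field_simp
  rw [hI] at key
  rw [← key, ← fc_eq_fourierCoeff F (f := fun θ => F θ) (fun _ => rfl), fc, smul_eq_mul]
  have := Complex.I_ne_zero
  push_cast
  field_simp

lemma hankelOp_reflect_boundary {h : ℂ → ℂ} (hc : ContinuousOn h (Metric.closedBall 0 1))
    (hd : DifferentiableOn ℂ h (Metric.ball 0 1)) (F : C(Torus, ℂ))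
    (hF : ∀ x, F x = h (AddCircle.toCircle x)) :
    hankelOp (reflect F) = 0 := by
  refine ext_of_ent fun j k => ?_
  have := fourierCoeff_boundary hc hd F hF (j + k + 1)
  rw [ent_hankelOp, fourierCoeff_reflect]
  push_cast at this
  rw [this]
  simp [ent]

lemma continuousOn_power_series {γ : ℕ → ℂ} (hγ : Summable fun k => ‖γ k‖) :
    ContinuousOn (fun z : ℂ => ∑' k, γ k * z ^ k) (Metric.closedBall 0 1) := by
  refine continuousOn_tsum (fun k => by fun_prop) hγ fun k z hz => ?_
  rw [norm_mul, norm_pow]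
  exact mul_le_of_le_one_right (norm_nonneg _)
    (pow_le_one₀ (norm_nonneg _) (mem_closedBall_zero_iff.mp hz))

lemma differentiableOn_power_series {γ : ℕ → ℂ} (hγ : Summable fun k => ‖γ k‖) :
    DifferentiableOn ℂ (fun z : ℂ => ∑' k, γ k * z ^ k) (Metric.ball 0 1) := by
  refine Complex.differentiableOn_tsum_of_summable_norm hγ (fun k => by fun_prop) Metric.isOpen_ball
    fun k z hz => ?_
  rw [norm_mul, norm_pow]
  exact mul_le_of_le_one_right (norm_nonneg _)
    (pow_le_one₀ (norm_nonneg _) (mem_ball_zero_iff.mp hz).le)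

/-- The boundary values on the circle of a function continuous on the closed unit disk. -/
def boundary (h : ℂ → ℂ) (hc : ContinuousOn h (Metric.closedBall 0 1)) : C(Torus, ℂ) where
  toFun x := h (AddCircle.toCircle x)
  continuous_toFun := hc.comp_continuous
    (continuous_subtype_val.comp AddCircle.continuous_toCircle) fun _ =>
      mem_closedBall_zero_iff.mpr (Circle.norm_coe _).le

end FourierCoefficients

/-- Let `a` be nonvanishing and even on the circle with absolutely summable Fourier
coefficients and Wiener–Hopf factorization `a(e^{iθ}) = a₊(e^{−iθ}) G a₊(e^{iθ})`, and set
`ψ(e^{iθ}) = a₊(e^{−iθ})/a₊(e^{iθ})`.  Then any bounded operator `I + H(ψ)` on ℓ²(ℕ) is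
invertible, and for every `n ≥ 1`:
`det((a_{j−k} + a_{j+k+1})_{j,k<n}) = Gⁿ · det[Pₙ (I + H(ψ))⁻¹ Pₙ]`. -/
theorem stmt5 (c : ℤ → ℂ) (hc : Summable fun k => ‖c k‖)
    (a : ℝ → ℂ)
    (ha : ∀ θ : ℝ, a θ = ∑' k : ℤ, c k * Complex.exp (Complex.I * k * θ))
    (heven : ∀ k : ℤ, c k = c (-k))
    (hnz : ∀ θ : ℝ, a θ ≠ 0)
    (γ : ℕ → ℂ) (hγ : Summable fun k => ‖γ k‖)
    (aplus : ℂ → ℂ) (haplus : ∀ z : ℂ, aplus z = ∑' k : ℕ, γ k * z ^ k)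
    (h0 : aplus 0 = 1)
    (hnz' : ∀ z : ℂ, ‖z‖ ≤ 1 → aplus z ≠ 0)
    (G : ℂ)
    (hfact : ∀ θ : ℝ, a θ =
      aplus (Complex.exp (-(Complex.I * θ))) * G * aplus (Complex.exp (Complex.I * θ)))
    (ψ : ℝ → ℂ)
    (hψ : ∀ θ : ℝ, ψ θ =
      aplus (Complex.exp (-(Complex.I * θ))) / aplus (Complex.exp (Complex.I * θ)))
    (A : l2 →L[ℂ] l2)
    (hA : ∀ j k : ℕ, ent A j k =
      (if j = k then 1 else 0) + fc ψ ((j : ℤ) + k + 1)) :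
    ∃ A' : l2 →L[ℂ] l2, A ∘L A' = 1 ∧ A' ∘L A = 1 ∧
      ∀ n : ℕ, 1 ≤ n →
        (Matrix.of fun j k : Fin n =>
            fc a ((j : ℤ) - k) + fc a ((j : ℤ) + k + 1)).det
          = G ^ n * (Matrix.of fun j k : Fin n => ent A' j k).det := by
  have haplus' : aplus = fun z => ∑' k, γ k * z ^ k := funext haplus
  have h_cont : ContinuousOn aplus (Metric.closedBall 0 1) :=
    haplus' ▸ continuousOn_power_series hγ
  have h_diff : DifferentiableOn ℂ aplus (Metric.ball 0 1) :=
    haplus' ▸ differentiableOn_power_series hγ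
  have h_cont_inv : ContinuousOn (fun z => (aplus z)⁻¹) (Metric.closedBall 0 1) :=
    h_cont.inv₀ fun z hz => hnz' z (mem_closedBall_zero_iff.mp hz)
  have h_diff_inv : DifferentiableOn ℂ (fun z => (aplus z)⁻¹) (Metric.ball 0 1) :=
    h_diff.inv fun z hz => hnz' z (mem_ball_zero_iff.mp hz).le
  set f : C(Torus, ℂ) := boundary aplus h_cont
  set g : C(Torus, ℂ) := boundary (fun z => (aplus z)⁻¹) h_cont_inv
  have hfθ : ∀ θ : ℝ, f θ = aplus (Complex.exp (Complex.I * θ)) := fun θ => by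
    rw [← toCircle_coe]; rfl
  have hgθ : ∀ θ : ℝ, g θ = (aplus (Complex.exp (Complex.I * θ)))⁻¹ := fun θ => by
    rw [← toCircle_coe]; rfl
  have hfθ' : ∀ θ : ℝ, reflect f θ = aplus (Complex.exp (-(Complex.I * θ))) := fun θ => by
    rw [reflect_apply, ← AddCircle.coe_neg, hfθ]
    push_cast
    rw [mul_neg]
  have hfg : f * g = 1 := by
    ext x
    exact mul_inv_cancel₀ (hnz' _ (Circle.norm_coe _).le)
  obtain ⟨B, hAB, hBA, hM⟩ := exists_inverse_one_add_hankelOp hfg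
    (hankelOp_reflect_boundary h_cont h_diff f fun _ => rfl)
    (hankelOp_reflect_boundary h_cont_inv h_diff_inv g fun _ => rfl)
  have hA' : A = 1 + hankelOp (reflect f * g) := by
    refine ext_of_ent fun j k => ?_
    rw [hA, ent_add, ent_one, ent_hankelOp, fc_eq_fourierCoeff (reflect f * g)]
    intro θ
    rw [hψ, ContinuousMap.mul_apply, hfθ', hgθ, div_eq_mul_inv]
  refine ⟨B, hA' ▸ hAB, hA' ▸ hBA, fun n _ => ?_⟩
  have hfca : ∀ k : ℤ, fc a k = G * fourierCoeff (reflect f * f : C(Torus, ℂ)) k := fun k => by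
    rw [← fourierCoeff.const_mul]
    refine fc_eq_fourierCoeff (G • (reflect f * f)) (fun θ => ?_) k
    rw [hfact, ContinuousMap.smul_apply, ContinuousMap.mul_apply, hfθ, hfθ', smul_eq_mul]
    ring
  have hcoeff : ∀ m : ℕ, fourierCoeff f (-(m : ℤ)) = 0 ^ m := fun m => by
    rw [fourierCoeff_boundary h_cont h_diff f (fun _ => rfl), h0, mul_one]
  have hlower : ∀ j k : ℕ, j ≤ k → fourierCoeff f ((j : ℤ) - k) = 0 ^ (k - j) := fun j k hjk => by
    rw [← hcoeff, Nat.cast_sub hjk, neg_sub]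
  have hmat : (Matrix.of fun j k : Fin n => fc a ((j : ℤ) - k) + fc a ((j : ℤ) + k + 1))
      = G • Matrix.of fun j k : Fin n =>
          ent (toeplitzOp f * B * toeplitzOp (reflect f)) j k := by
    ext j k
    simp only [Matrix.smul_apply, Matrix.of_apply, smul_eq_mul]
    rw [← hM, ent_add, ent_toeplitzOp, ent_hankelOp, hfca, hfca]
    ring
  rw [hmat, Matrix.det_smul, Fintype.card_fin, det_section_of_unipotent]
  · intro j k hjk
    rw [ent_toeplitzOp, hlower j k hjk.le, zero_pow (by omega)]
  · intro j
    rw [ent_toeplitzOp, hlower j j le_rfl, Nat.sub_self, pow_zero]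
  · intro j k hjk
    rw [ent_toeplitzOp, fourierCoeff_reflect, neg_sub, hlower k j hjk.le, zero_pow (by omega)]
  · intro j
    rw [ent_toeplitzOp, fourierCoeff_reflect, neg_sub, hlower j j le_rfl, Nat.sub_self, pow_zero]

end
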